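/- arXiv:2303.16872 — 2 statements merged into one kernel-verified Lean document; each statement's English description precedes it below -/
import Mathlib

section
/- For all real numbers x > 0, y > 0 and C > 0, one has C·log(1+x) ≤ x²/y + C·log(1+C·y). -/
/-! The logarithm lies below its tangent line at `1 + C * y`, so `log (1 + x)` exceeds
`log (1 + C * y)` by at most `(x - C * y) / (1 + C * y)`. Since `C * y` and `x - C * y` sum to `x`,
their product is at most `x ^ 2 / 4`. -/

theorem log_le_log_add_sub_div {a b : ℝ} (ha : 0 < a) (hb : 0 < b) :
    Real.log a ≤ Real.log b + (a - b) / b := by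
  have ratio_bound : Real.log (a / b) ≤ a / b - 1 := Real.log_le_sub_one_of_pos (div_pos ha hb)
  rw [Real.log_div ha.ne' hb.ne'] at ratio_bound
  rw [sub_div, div_self hb.ne']
  linarith

theorem mul_sub_mul_le_sq_div_four_mul {K : Type*} [Field K] [LinearOrder K]
    [IsStrictOrderedRing K] (x c : K) {y : K} (hy : 0 < y) :
    c * (x - c * y) ≤ x ^ 2 / (4 * y) := by
  rw [le_div_iff₀ (by positivity)]
  calc c * (x - c * y) * (4 * y) = 4 * (c * y) * (x - c * y) := by ring
    _ ≤ (c * y + (x - c * y)) ^ 2 := four_mul_le_sq_add _ _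
    _ = x ^ 2 := by ring

theorem log_one_add_le_sq_div_add_log_one_add_mul_general {x y C : ℝ}
    (hx : -1 < x) (hy : 0 < y) (hC : 0 ≤ C) :
    C * Real.log (1 + x) ≤ x ^ 2 / (4 * y * (1 + C * y)) + C * Real.log (1 + C * y) := by
  have hb : 0 < 1 + C * y := by positivity
  calc C * Real.log (1 + x)
      ≤ C * (Real.log (1 + C * y) + (1 + x - (1 + C * y)) / (1 + C * y)) := by
        gcongr
        exact log_le_log_add_sub_div (by linarith) hb
    _ = C * (x - C * y) / (1 + C * y) + C * Real.log (1 + C * y) := by ring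
    _ ≤ x ^ 2 / (4 * y) / (1 + C * y) + C * Real.log (1 + C * y) := by
        gcongr
        exact mul_sub_mul_le_sq_div_four_mul x C hy
    _ = x ^ 2 / (4 * y * (1 + C * y)) + C * Real.log (1 + C * y) := by rw [div_div]

theorem log_one_add_le_sq_div_add_log_one_add_mul
    (x y C : ℝ) (hx : 0 < x) (hy : 0 < y) (hC : 0 < C) :
    C * Real.log (1 + x) ≤ x ^ 2 / y + C * Real.log (1 + C * y) := by
  have hden : y ≤ 4 * y * (1 + C * y) := by nlinarith [mul_pos hC hy]
  exact (log_one_add_le_sq_div_add_log_one_add_mul_general (by linarith) hy hC.le).trans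
    (by gcongr)
end

section
/- Let n be a positive natural number and let γ > 0, m ≥ 0, η ≥ 0, z ≥ 0 be real numbers. Then η·log(z+1) ≤ (γ/(2n))·exp(−γ·m)·z² + η·(1 + γ·m + log(η+1) + 2n/γ). -/
/-!
Either `x ≤ C y`, and then `log (1 + x) ≤ log (1 + C y)`, or `C ≤ x / y`, and then
`C log (1 + x) ≤ C x ≤ x² / y`; hence `C log (1 + x) ≤ x² / y + C log (1 + C y)` in both cases.
With `a = 2n/γ` and `s = γm`, the choice `y = a exp s` makes `x² / y` the quadratic term, and the
remaining logarithm splits because `1 + x y ≤ (1 + x) (1 + y)` for `x, y ≥ 0` and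
`1 + a exp s ≤ (1 + a) exp s` for `s ≥ 0`.
-/

lemma mul_log_one_add_le_sq_div_add {C x y : ℝ} (hC : 0 ≤ C) (hx : -1 < x) (hy : 0 < y) :
    C * Real.log (1 + x) ≤ x ^ 2 / y + C * Real.log (1 + C * y) := by
  have hCy : 0 ≤ C * y := by positivity
  rcases le_total x (C * y) with hxC | hCx
  · calc
      C * Real.log (1 + x) ≤ C * Real.log (1 + C * y) := by
        gcongr
        linarith
      _ ≤ x ^ 2 / y + C * Real.log (1 + C * y) := le_add_of_nonneg_left (by positivity)
  · have hx₀ : 0 ≤ x := hCy.trans hCx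
    have hlog : Real.log (1 + x) ≤ x := by
      linarith [Real.log_le_sub_one_of_pos (by positivity : 0 < 1 + x)]
    calc
      C * Real.log (1 + x) ≤ C * x := by gcongr
      _ ≤ x / y * x := by
        gcongr
        exact (le_div_iff₀ hy).2 hCx
      _ = x ^ 2 / y := by ring
      _ ≤ x ^ 2 / y + C * Real.log (1 + C * y) :=
        le_add_of_nonneg_right (mul_nonneg hC (Real.log_nonneg (by linarith)))

lemma log_one_add_mul_le {x y : ℝ} (hx : 0 ≤ x) (hy : 0 ≤ y) :
    Real.log (1 + x * y) ≤ Real.log (1 + x) + Real.log (1 + y) := by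
  rw [← Real.log_mul (by positivity) (by positivity)]
  exact Real.log_le_log (by positivity) (by linarith)

lemma log_one_add_mul_exp_le {a s : ℝ} (ha : 0 ≤ a) (hs : 0 ≤ s) :
    Real.log (1 + a * Real.exp s) ≤ Real.log (1 + a) + s := by
  calc
    Real.log (1 + a * Real.exp s) ≤ Real.log ((1 + a) * Real.exp s) :=
      Real.log_le_log (by positivity) (by linarith [Real.one_le_exp hs])
    _ = Real.log (1 + a) + s := by
      rw [Real.log_mul (by positivity) (Real.exp_ne_zero s), Real.log_exp]

theorem eta_log_le_quadratic_general {a s η z : ℝ}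
    (ha : 0 < a) (hs : 0 ≤ s) (hη : 0 ≤ η) (hz : -1 < z) :
    η * Real.log (z + 1) ≤
      a⁻¹ * Real.exp (-s) * z ^ 2 + η * (s + Real.log (η + 1) + Real.log (1 + a)) := by
  rw [add_comm z 1, add_comm η 1]
  have hlog : Real.log (1 + η * (a * Real.exp s)) ≤ s + Real.log (1 + η) + Real.log (1 + a) := by
    linarith [log_one_add_mul_le hη (by positivity : 0 ≤ a * Real.exp s),
      log_one_add_mul_exp_le ha.le hs]
  calc
    η * Real.log (1 + z)
        ≤ z ^ 2 / (a * Real.exp s) + η * Real.log (1 + η * (a * Real.exp s)) :=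
      mul_log_one_add_le_sq_div_add hη hz (by positivity)
    _ = a⁻¹ * Real.exp (-s) * z ^ 2 + η * Real.log (1 + η * (a * Real.exp s)) := by
      rw [Real.exp_neg, ← mul_inv, inv_mul_eq_div]
    _ ≤ a⁻¹ * Real.exp (-s) * z ^ 2 + η * (s + Real.log (1 + η) + Real.log (1 + a)) := by
      gcongr

theorem eta_log_le_quadratic (n : ℕ) (hn : 0 < n) (γ m η z : ℝ)
    (hγ : 0 < γ) (hm : 0 ≤ m) (hη : 0 ≤ η) (hz : 0 ≤ z) :
    η * Real.log (z + 1) ≤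
      (γ / (2 * n)) * Real.exp (-(γ * m)) * z ^ 2 +
        η * (1 + γ * m + Real.log (η + 1) + 2 * n / γ) := by
  have ha : 0 < 2 * n / γ := by positivity
  rw [← inv_div (2 * (n : ℝ)) γ]
  refine (eta_log_le_quadratic_general ha (mul_nonneg hγ.le hm) hη (by linarith)).trans ?_
  gcongr _ + η * ?_
  linarith [Real.log_le_sub_one_of_pos (by positivity : 0 < 1 + 2 * n / γ)]
end
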